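/- Let H be a cochordal finite simple graph on vertex set [n] with no isolated vertices, and let G be the graph on vertex set [n+2] with edge set E(H) ∪ {{n+1, n+2}}. If the normalized depth function g_{I(H)} is non-increasing on {1,…,ν(I(H))}, then g_{I(G)} is non-increasing on {1,…,ν(I(G))} = {1,…,ν(I(H))+1}. -/

import Mathlib

open MvPolynomial

/-- The squarefree monomial `∏ i ∈ F, xᵢ`. -/
noncomputable def sqMon (K : Type) [Field K] {σ : Type} (F : Finset σ) :
    MvPolynomial σ K := ∏ i ∈ F, X i

/-- `I` is a squarefree monomial ideal if it is generated by squarefree monomials. -/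
def IsSqfreeMonomialIdeal (K : Type) [Field K] {σ : Type}
    (I : Ideal (MvPolynomial σ K)) : Prop :=
  ∃ 𝒢 : Set (Finset σ), I = Ideal.span ((sqMon K) '' 𝒢)

/-- The `k`-th squarefree power `I^[k]`: the ideal generated by all squarefree
monomials belonging to `I^k`. -/
noncomputable def sqfreePower (K : Type) [Field K] {σ : Type}
    (I : Ideal (MvPolynomial σ K)) (k : ℕ) : Ideal (MvPolynomial σ K) :=
  Ideal.span {m | ∃ F : Finset σ, m = sqMon K F ∧ m ∈ I ^ k}

/-- The monomial grade `ν(I)`: the largest `k` with `I^[k] ≠ (0)`. -/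
noncomputable def monGrade (K : Type) [Field K] {σ : Type}
    (I : Ideal (MvPolynomial σ K)) : ℕ :=
  sSup {k | sqfreePower K I k ≠ ⊥}

/-- The initial degree of a squarefree monomial ideal: the least degree of a
(squarefree) monomial belonging to it. -/
noncomputable def indeg (K : Type) [Field K] {σ : Type}
    (I : Ideal (MvPolynomial σ K)) : ℕ :=
  sInf {d | ∃ F : Finset σ, F.card = d ∧ sqMon K F ∈ I}

/-- The depth of `S/I` over the polynomial ring `S`: the longest length of a
regular sequence on `S/I` consisting of elements of the irrelevant maximal ideal. -/
noncomputable def polyDepth (K : Type) [Field K] {σ : Type}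
    (I : Ideal (MvPolynomial σ K)) : ℕ :=
  sSup {k | ∃ rs : List (MvPolynomial σ K), rs.length = k ∧
    (∀ r ∈ rs, r ∈ Ideal.span (Set.range (X : σ → MvPolynomial σ K))) ∧
    RingTheory.Sequence.IsRegular (MvPolynomial σ K ⧸ I) rs}

/-- The normalized depth function `g_I(k) = depth(S/I^[k]) - (indeg(I^[k]) - 1)`. -/
noncomputable def nDepth (K : Type) [Field K] {σ : Type}
    (I : Ideal (MvPolynomial σ K)) (k : ℕ) : ℤ :=
  (polyDepth K (sqfreePower K I k) : ℤ) - ((indeg K (sqfreePower K I k) : ℤ) - 1)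

open MvPolynomial

/-- The edge ideal of a graph, generated by `xᵢxⱼ` for edges `{i,j}`. -/
noncomputable def edgeIdeal (K : Type) [Field K] {V : Type} (G : SimpleGraph V) :
    Ideal (MvPolynomial V K) :=
  Ideal.span {m | ∃ i j, G.Adj i j ∧ m = X i * X j}

/-- A finite set of edges of `G` forming a matching (pairwise vertex-disjoint edges). -/
def IsMatchingSet {V : Type} (G : SimpleGraph V) (M : Finset (Sym2 V)) : Prop :=
  (↑M ⊆ G.edgeSet) ∧ ∀ e ∈ M, ∀ f ∈ M, e ≠ f → ∀ v, v ∈ e → v ∉ f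

/-- The vertex set of a set of edges. -/
def matchVerts {V : Type} (M : Finset (Sym2 V)) : Set V := {v | ∃ e ∈ M, v ∈ e}

/-- The matching number of `G`. -/
noncomputable def matchNum {V : Type} (G : SimpleGraph V) : ℕ :=
  sSup {k | ∃ M : Finset (Sym2 V), IsMatchingSet G M ∧ M.card = k}

/-- A graph is chordal if it has no induced cycle of length `≥ 4`. -/
def IsChordal {V : Type} (G : SimpleGraph V) : Prop :=
  ∀ m : ℕ, 4 ≤ m → ∀ v : ZMod m → V, Function.Injective v →
    ¬ (∀ i j : ZMod m, G.Adj (v i) (v j) ↔ (j = i + 1 ∨ i = j + 1))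

/-- `v` is a cut vertex of the connected graph `G`:
removing it disconnects the graph. -/
def IsCutVertex {V : Type} (G : SimpleGraph V) (v : V) : Prop :=
  G.Connected ∧ ¬ (G.induce {u | u ≠ v}).Connected

/-- `G` has no isolated vertices. -/
def NoIsolated {V : Type} (G : SimpleGraph V) : Prop := ∀ v, ∃ u, G.Adj v u

/-- The normalized depth function of an ideal extended by the conventions
`g_I(0) = g_I(ν(I)+1) = +∞` (i.e. `+∞` outside `{1,…,ν(I)}`). -/
noncomputable def gExt (K : Type) [Field K] {σ : Type}
    (I : Ideal (MvPolynomial σ K)) (k : ℕ) : WithTop ℤ :=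
  if 1 ≤ k ∧ k ≤ monGrade K I then ((nDepth K I k : ℤ) : WithTop ℤ) else ⊤

/-- `G` is obtained from a graph `H` on `[n]` by adjoining the disjoint edge
`{n+1, n+2}` on two new vertices. -/
def IsAdjoinEdge {n : ℕ} (H : SimpleGraph (Fin n)) (G : SimpleGraph (Fin (n + 2))) : Prop :=
  ∀ a b : Fin (n + 2), G.Adj a b ↔
    ((∃ a' b' : Fin n, H.Adj a' b' ∧
        a = Fin.castLE (by omega) a' ∧ b = Fin.castLE (by omega) b') ∨
      (a = ⟨n, by omega⟩ ∧ b = ⟨n + 1, by omega⟩) ∨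
      (a = ⟨n + 1, by omega⟩ ∧ b = ⟨n, by omega⟩))

/-!
Since the new edge `yz` is disjoint from `H`, one has `I(G)^[k+1] = I(H)^[k+1] + yz I(H)^[k]`, and
adjoining `y` and `z` one at a time reduces everything to ideals `A + yB` of `T[y]` with `A ⊆ B`.
The exact sequence `0 → T[y]/B → T[y]/(A + yB) → T/A → 0`, whose first map is multiplication by
`y`, bounds the depth of `T[y]/(A + yB)` from below. Conversely, that depth is at most
`depth T/B + 1`: if it is at least `2`, then some element of the maximal ideal of `T` is regular on
both `T/A` and `T/B`, and one divides by it and inducts.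

Let `D k` and `E k` be the depths of the `k`-th squarefree powers of `I(H)` and `I(G)`. The upper
bound gives `E (k+1) ≤ D k + 2`. The lower bound gives `D k ≤ E k` as soon as
`D k ≤ D (k-1) + 2` or `k = 1`. As the initial degree is `2k`, that is the hypothesis on `H`, and
the conclusion on `G` is `E (k+1) ≤ E k + 2`.
-/

section Grade

universe u

open CategoryTheory Abelian

variable {R : Type u} [CommRing R]

/-- The grade of the ideal `𝔞` on the module `M` (the length of the longest `M`-regular sequences
in `𝔞`) is at least `d`. It is encoded by Rees' vanishing criterion for `Ext (R ⧸ 𝔞) M`, so the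
grade of `𝔞` on a module `M = 𝔞 M`, in particular on the zero module, is infinite. -/
def GradeGE (𝔞 : Ideal R) (M : Type u) [AddCommGroup M] [Module R M] (d : ℕ) : Prop :=
  ∀ i < d, Subsingleton (Ext (ModuleCat.of R (R ⧸ 𝔞)) (ModuleCat.of R M) i)

lemma ext_comp_smul_id_eq_zero {X Y : ModuleCat.{u} R} {r : R} {n : ℕ}
    (hr : r ∈ Module.annihilator R X) (x : Ext X Y n) :
    x.comp (Ext.mk₀ (r • 𝟙 Y)) (add_zero n) = 0 :=
  congr($(Ext.postcomp_smul_id_eq_zero_of_mem_annihilator (M := Y) hr n) x)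

section MulQuotient

variable {I Q : Ideal R} {r : R}

/-- The map `R ⧸ Q → R ⧸ I` given by multiplication by an element `r` with `r Q ⊆ I`. -/
def mulQuotient (h : Q ≤ Submodule.comap (LinearMap.mulLeft R r) I) : R ⧸ Q →ₗ[R] R ⧸ I :=
  Submodule.mapQ Q I (LinearMap.mulLeft R r) h

lemma mulQuotient_injective (h : Q ≤ Submodule.comap (LinearMap.mulLeft R r) I)
    (hQ : Submodule.comap (LinearMap.mulLeft R r) I ≤ Q) :
    Function.Injective (mulQuotient h) := by
  rw [← LinearMap.ker_eq_bot, mulQuotient, Submodule.ker_mapQ, ← LinearMap.le_ker_iff_map,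
    Submodule.ker_mkQ]
  exact hQ

lemma mulQuotient_exact (h : Q ≤ Submodule.comap (LinearMap.mulLeft R r) I) :
    Function.Exact (mulQuotient h) (Submodule.factor (le_sup_left : I ≤ I ⊔ Ideal.span {r})) := by
  have hrange : (LinearMap.mulLeft R r).range = Ideal.span {r} := by
    ext x
    simp [Ideal.mem_span_singleton', mul_comm]
  rw [LinearMap.exact_iff, Submodule.factor, mulQuotient, Submodule.ker_mapQ,
    Submodule.range_mapQ, hrange, Submodule.comap_id, Submodule.map_sup, Submodule.mkQ_map_self,
    bot_sup_eq]

end MulQuotient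

namespace GradeGE

variable {𝔞 : Ideal R} {d e : ℕ} {M N P : Type u} [AddCommGroup M] [Module R M]
  [AddCommGroup N] [Module R N] [AddCommGroup P] [Module R P]

lemma mono (h : GradeGE 𝔞 M d) (hed : e ≤ d) : GradeGE 𝔞 M e :=
  fun i hi ↦ h i (hi.trans_le hed)

lemma zero : GradeGE 𝔞 M 0 := fun _ hi ↦ absurd hi (Nat.not_lt_zero _)

lemma of_subsingleton [Subsingleton M] : GradeGE 𝔞 M d := by
  refine fun i _ ↦ subsingleton_of_forall_eq 0 fun x ↦ ?_
  have hid : 𝟙 (ModuleCat.of R M) = 0 := by ext m; exact Subsingleton.elim _ _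
  rw [← Ext.comp_mk₀_id x, hid, Ext.mk₀_zero, Ext.comp_zero]

section Exact

variable {f : M →ₗ[R] N} {g : N →ₗ[R] P}

lemma of_exact_middle (hf : Function.Injective f) (hfg : Function.Exact f g)
    (hg : Function.Surjective g) (hM : GradeGE 𝔞 M d) (hP : GradeGE 𝔞 P d) :
    GradeGE 𝔞 N d := by
  intro i hi
  have hM := hM i hi
  have hP := hP i hi
  have exact := ModuleCat.shortComplex_shortExact
    (ModuleCat.shortComplexOfCompEqZero f g hfg.linearMap_comp_eq_zero) hfg hf hg
  refine subsingleton_of_forall_eq 0 fun x ↦ ?_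
  obtain ⟨y, rfl⟩ := Ext.covariant_sequence_exact₂ _ exact x (hP.elim _ _)
  rw [hM.elim y 0, Ext.zero_comp]

lemma of_exact_right (hf : Function.Injective f) (hfg : Function.Exact f g)
    (hg : Function.Surjective g) (hM : GradeGE 𝔞 M (d + 1)) (hN : GradeGE 𝔞 N d) :
    GradeGE 𝔞 P d := by
  intro i hi
  have hM := hM (i + 1) (by lia)
  have hN := hN i hi
  have exact := ModuleCat.shortComplex_shortExact
    (ModuleCat.shortComplexOfCompEqZero f g hfg.linearMap_comp_eq_zero) hfg hf hg
  refine subsingleton_of_forall_eq 0 fun x ↦ ?_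
  obtain ⟨y, rfl⟩ := Ext.covariant_sequence_exact₃ _ exact x rfl (hM.elim _ _)
  rw [hN.elim y 0, Ext.zero_comp]

end Exact

lemma prod (hM : GradeGE 𝔞 M d) (hN : GradeGE 𝔞 N d) : GradeGE 𝔞 (M × N) d :=
  of_exact_middle LinearMap.inl_injective Function.Exact.inl_snd LinearMap.snd_surjective hM hN

lemma one_iff : GradeGE 𝔞 M 1 ↔ Subsingleton ((R ⧸ 𝔞) →ₗ[R] M) := by
  simp only [GradeGE, Nat.lt_one_iff, forall_eq]
  exact (Ext.addEquiv₀.trans ModuleCat.homAddEquiv).subsingleton_congr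

lemma exists_isSMulRegular [IsNoetherianRing R] [Module.Finite R M] (h : GradeGE 𝔞 M 1) :
    ∃ f ∈ 𝔞, IsSMulRegular M f := by
  obtain ⟨f, hf, hreg⟩ := IsSMulRegular.subsingleton_linearMap_iff.mp (one_iff.mp h)
  exact ⟨f, Ideal.annihilator_quotient (I := 𝔞) ▸ hf, hreg⟩

lemma one_iff_forall_mul_mem {I : Ideal R} :
    GradeGE 𝔞 (R ⧸ I) 1 ↔ ∀ x, (∀ a ∈ 𝔞, a * x ∈ I) → x ∈ I := by
  constructor
  · intro h x hx
    have hker : 𝔞 ≤ (LinearMap.toSpanSingleton R (R ⧸ I) (Ideal.Quotient.mk I x)).ker :=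
      fun a ha ↦ Ideal.Quotient.eq_zero_iff_mem.mpr (hx a ha)
    have hzero := (one_iff.mp h).elim (Submodule.liftQ 𝔞 _ hker) 0
    have hx := LinearMap.congr_fun hzero (Submodule.Quotient.mk 1)
    rw [Submodule.liftQ_apply, LinearMap.toSpanSingleton_apply, one_smul] at hx
    exact Ideal.Quotient.eq_zero_iff_mem.mp hx
  · refine fun h ↦ one_iff.mpr (subsingleton_of_forall_eq 0 fun φ ↦ LinearMap.ext fun q ↦ ?_)
    obtain ⟨x, hx⟩ := Ideal.Quotient.mk_surjective (φ q)
    rw [← hx]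
    refine Ideal.Quotient.eq_zero_iff_mem.mpr (h x fun a ha ↦ ?_)
    have haq : a • q = 0 := Module.mem_annihilator.mp (by rwa [Ideal.annihilator_quotient]) q
    rw [← Ideal.Quotient.eq_zero_iff_mem, map_mul, hx, ← Ideal.Quotient.algebraMap_eq,
      ← Algebra.smul_def, ← map_smul, haq, map_zero]

lemma succ_iff_of_exact {x : R} {f : M →ₗ[R] M} {g : M →ₗ[R] P} (hx : x ∈ 𝔞)
    (hfx : ∀ m, f m = x • m) (hf : Function.Injective f) (hfg : Function.Exact f g)
    (hg : Function.Surjective g) : GradeGE 𝔞 M (d + 1) ↔ GradeGE 𝔞 P d := by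
  refine ⟨fun h ↦ of_exact_right hf hfg hg h (h.mono d.le_succ), fun h i hi ↦ ?_⟩
  have hx : x ∈ Module.annihilator R (R ⧸ 𝔞) := by rwa [Ideal.annihilator_quotient]
  obtain _ | i := i
  · have hreg : IsSMulRegular M x := fun a b hab ↦ hf (by simpa [hfx] using hab)
    exact one_iff.mpr (hreg.linearMap_subsingleton_of_mem_annihilator hx) 0 one_pos
  have hP := h i (by lia)
  have exact := ModuleCat.shortComplex_shortExact
    (ModuleCat.shortComplexOfCompEqZero f g hfg.linearMap_comp_eq_zero) hfg hf hg
  have hfx : ModuleCat.ofHom f = x • 𝟙 (ModuleCat.of R M) := by ext m; simp [hfx]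
  refine subsingleton_of_forall_eq 0 fun y ↦ ?_
  have hy : y.comp (Ext.mk₀ (ModuleCat.ofHom f)) (add_zero (i + 1)) = 0 := by
    rw [hfx, ext_comp_smul_id_eq_zero hx]
  obtain ⟨z, rfl⟩ := Ext.covariant_sequence_exact₁ _ exact y hy rfl
  rw [hP.elim z 0, Ext.zero_comp]

section Quotient

variable {I : Ideal R} {f : R}

lemma sup_span_iff (hf : f ∈ 𝔞) (hreg : IsSMulRegular (R ⧸ I) f) :
    GradeGE 𝔞 (R ⧸ I ⊔ Ideal.span {f}) d ↔ GradeGE 𝔞 (R ⧸ I) (d + 1) :=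
  have hmul : I ≤ Submodule.comap (LinearMap.mulLeft R f) I := fun _ hx ↦ I.mul_mem_left f hx
  have hinj := mulQuotient_injective hmul
    ((isSMulRegular_quotient_iff_mem_of_smul_mem I f).mp hreg)
  (succ_iff_of_exact hf (Submodule.mkQ_surjective I |>.forall.mpr fun _ ↦ rfl) hinj
    (mulQuotient_exact hmul) (Submodule.factor_surjective _)).symm

lemma of_colon {Q : Ideal R} (hQ : ∀ x, f * x ∈ I ↔ x ∈ Q) (hcolon : GradeGE 𝔞 (R ⧸ Q) d)
    (hsup : GradeGE 𝔞 (R ⧸ I ⊔ Ideal.span {f}) d) : GradeGE 𝔞 (R ⧸ I) d :=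
  have hmul : Q ≤ Submodule.comap (LinearMap.mulLeft R f) I := fun x ↦ (hQ x).mpr
  of_exact_middle (mulQuotient_injective hmul fun x ↦ (hQ x).mp) (mulQuotient_exact hmul)
    (Submodule.factor_surjective _) hcolon hsup

/-- In other words, `y` acts surjectively on the submodule `0 : 𝔭` of `R ⧸ I`. -/
lemma exists_sub_mul_mem [IsNoetherianRing R] {𝔭 : Ideal R} {y e : R}
    (h : GradeGE (Ideal.span {y} ⊔ 𝔭) (R ⧸ I) 2) (he : ∀ a ∈ 𝔭, a * e ∈ I) :
    ∃ m, (∀ a ∈ 𝔭, a * m ∈ I) ∧ e - y * m ∈ I := by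
  obtain ⟨r, hr, hregr⟩ := (h.mono one_le_two).exists_isSMulRegular
  obtain ⟨s, hs, hregs⟩ := ((sup_span_iff hr hregr).mpr h).exists_isSMulRegular
  rw [isSMulRegular_quotient_iff_mem_of_smul_mem] at hregr hregs
  obtain ⟨g, p, hp, rfl⟩ := Ideal.mem_span_singleton_sup.mp hr
  obtain ⟨k, q, hq, rfl⟩ := Ideal.mem_span_singleton_sup.mp hs
  obtain ⟨m, i, hi, hm⟩ : ∃ m, ∃ i ∈ I, m * (g * y + p) + i = g * e := by
    refine Ideal.mem_span_singleton_sup.mp (sup_comm I _ ▸ hregs _ ?_)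
    rw [sup_comm]
    refine Ideal.mem_span_singleton_sup.mpr ⟨k * e, g * (q * e) - k * (p * e),
      I.sub_mem (I.mul_mem_left g (he q hq)) (I.mul_mem_left k (he p hp)), ?_⟩
    simp only [smul_eq_mul]
    ring
  refine ⟨m, fun a ha ↦ hregr _ ?_, hregr _ ?_⟩
  · have hmem := I.sub_mem (I.mul_mem_left g (he a ha)) (I.mul_mem_left a hi)
    rwa [show g * (a * e) - a * i = (g * y + p) • (a * m) by
      rw [smul_eq_mul]; linear_combination a * hm.symm] at hmem
  · have hmem := I.add_mem (he p hp) (I.mul_mem_left y hi)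
    rwa [show p * e + y * i = (g * y + p) • (e - y * m) by
      rw [smul_eq_mul]; linear_combination y * hm] at hmem

end Quotient

end GradeGE

lemma exists_not_gradeGE [IsNoetherianRing R] {𝔞 : Ideal R} (h𝔞 : 𝔞 ≠ ⊤) (I : Ideal R)
    (hI : I ≤ 𝔞) : ∃ d, ¬GradeGE 𝔞 (R ⧸ I) d := by
  induction I using WellFoundedGT.induction with
  | ind I ih =>
    by_contra! hcon
    obtain ⟨f, hf, hreg⟩ := (hcon 1).exists_isSMulRegular
    have hfI : f ∉ I := fun h ↦ h𝔞 <| (Ideal.eq_top_iff_one _).mpr <| hI <|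
      (isSMulRegular_quotient_iff_mem_of_smul_mem I f).mp hreg 1 (by simpa using h)
    obtain ⟨d, hd⟩ := ih (I ⊔ Ideal.span {f})
      (left_lt_sup.mpr fun h ↦ hfI (h (Ideal.mem_span_singleton_self f)))
      (sup_le hI ((Ideal.span_singleton_le_iff_mem 𝔞).mpr hf))
    exact hd ((GradeGE.sup_span_iff hf hreg).mpr (hcon (d + 1)))

lemma gradeGE_iff_exists_isRegular [IsNoetherianRing R] {𝔞 I : Ideal R} {d : ℕ} (h𝔞 : 𝔞 ≠ ⊤)
    (hI : I ≤ 𝔞) : GradeGE 𝔞 (R ⧸ I) d ↔ ∃ rs : List R, rs.length = d ∧ (∀ r ∈ rs, r ∈ 𝔞) ∧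
      RingTheory.Sequence.IsRegular (R ⧸ I) rs := by
  have hlt : 𝔞 • (⊤ : Submodule R (R ⧸ I)) < ⊤ := by
    have hmap : 𝔞 • (⊤ : Submodule R (R ⧸ I)) = Submodule.map I.mkQ 𝔞 := by
      rw [← I.range_mkQ, ← Submodule.map_top, ← Submodule.map_smul'', smul_eq_mul, Ideal.mul_top]
    rwa [hmap, lt_top_iff_ne_top, Ne, I.map_mkQ_eq_top, sup_eq_right.mpr hI]
  have hsupp : Module.support R (R ⧸ 𝔞) = PrimeSpectrum.zeroLocus 𝔞 := by
    rw [Module.support_eq_zeroLocus, Ideal.annihilator_quotient]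
  constructor
  · exact ModuleCat.exists_isRegular_of_exists_subsingleton_ext 𝔞 d (.of R (R ⧸ I)) hlt
      (.of R (R ⧸ 𝔞)) hsupp
  · rintro ⟨rs, rfl, hrs, hreg⟩
    exact ModuleCat.subsingleton_ext_of_exists_isRegular 𝔞 (.of R (R ⧸ 𝔞)) hsupp.subset
      (.of R (R ⧸ I)) hlt rs hrs hreg

lemma GradeGE.comap {S : Type u} [CommRing S] [IsNoetherianRing S]
    {φ : S →+* R} (hφ : Function.Surjective φ) {𝔞 I : Ideal R} {d : ℕ} (h : GradeGE 𝔞 (R ⧸ I) d) :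
    GradeGE (𝔞.comap φ) (S ⧸ I.comap φ) d := by
  have := isNoetherianRing_of_surjective S R φ hφ
  induction d generalizing I with
  | zero => exact zero
  | succ d ih =>
    obtain ⟨f, hf, hreg⟩ := (h.mono d.succ_pos).exists_isSMulRegular
    obtain ⟨f, rfl⟩ := hφ f
    have hcomap : I.comap φ ⊔ Ideal.span {f} = (I ⊔ Ideal.span {φ f}).comap φ := by
      have hmap : I ⊔ Ideal.span {φ f} = (I.comap φ ⊔ Ideal.span {f}).map φ := by
        rw [Ideal.map_sup, Ideal.map_comap_of_surjective φ hφ, Ideal.map_span,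
          Set.image_singleton]
      rw [hmap, Ideal.comap_map_of_surjective' φ hφ, eq_comm, sup_eq_left]
      exact (Ideal.comap_mono bot_le).trans le_sup_left
    have hreg' : IsSMulRegular (S ⧸ I.comap φ) f := by
      rw [isSMulRegular_quotient_iff_mem_of_smul_mem] at hreg ⊢
      exact fun x hx ↦ hreg (φ x) (by simpa using hx)
    rw [← sup_span_iff (𝔞 := 𝔞.comap φ) hf hreg', hcomap]
    exact ih ((sup_span_iff hf hreg).mpr h)

lemma gradeGE_comap_iff {S : Type u} [CommRing S] [IsNoetherianRing S]
    (e : S ≃+* R) {𝔞 I : Ideal R} {d : ℕ} :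
    GradeGE (𝔞.comap e) (S ⧸ I.comap e) d ↔ GradeGE 𝔞 (R ⧸ I) d := by
  have := isNoetherianRing_of_ringEquiv S e
  refine ⟨fun h ↦ ?_, GradeGE.comap (φ := e.toRingHom) e.surjective⟩
  have hsymm (J : Ideal R) : (J.comap e).comap e.symm.toRingHom = J :=
    Ideal.ext fun x ↦ iff_of_eq (congrArg (· ∈ J) (e.apply_symm_apply x))
  have h' := h.comap (φ := e.symm.toRingHom) e.symm.surjective
  rwa [hsymm, hsymm] at h'

end Grade

section AdjoinVar

open scoped Polynomial

universe u

variable {T : Type u} [CommRing T] {𝔞 A B : Ideal T} {d : ℕ}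

/-- The ideal `A + yB` of the polynomial ring `T[y]`. -/
noncomputable def adjoinVar (A B : Ideal T) : Ideal T[X] :=
  A.map Polynomial.C ⊔ Ideal.span {Polynomial.X} * B.map Polynomial.C

lemma mem_adjoinVar (hAB : A ≤ B) {p : T[X]} :
    p ∈ adjoinVar A B ↔ p.coeff 0 ∈ A ∧ ∀ i, p.coeff (i + 1) ∈ B := by
  constructor
  · have hle : adjoinVar A B ≤ A.comap Polynomial.constantCoeff ⊓ B.map Polynomial.C := by
      refine sup_le (le_inf (Ideal.map_le_iff_le_comap.mpr fun a ha ↦ by simpa)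
        (Ideal.map_mono hAB)) (le_inf (Ideal.mul_le_left.trans ?_) Ideal.mul_le_right)
      simp
    exact fun hp ↦ ⟨(hle hp).1, fun i ↦ Ideal.mem_map_C_iff.mp (hle hp).2 (i + 1)⟩
  · rintro ⟨h0, h⟩
    rw [← p.X_mul_divX_add]
    refine Ideal.add_mem _ (Ideal.mem_sup_right ?_)
      (Ideal.mem_sup_left (Ideal.mem_map_of_mem _ h0))
    refine Ideal.mul_mem_mul (Ideal.mem_span_singleton_self _) (Ideal.mem_map_C_iff.mpr ?_)
    simpa using h

lemma adjoinVar_self (A : Ideal T) : adjoinVar A A = A.map Polynomial.C :=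
  sup_eq_left.mpr Ideal.mul_le_right

lemma span_X_sup_map_C (A : Ideal T) :
    Ideal.span {Polynomial.X} ⊔ A.map Polynomial.C = A.comap Polynomial.constantCoeff := by
  have htop : adjoinVar A ⊤ = Ideal.span {Polynomial.X} ⊔ A.map Polynomial.C := by
    rw [adjoinVar, Ideal.map_top, Ideal.mul_top, sup_comm]
  ext p
  rw [← htop, mem_adjoinVar le_top]
  simp

lemma adjoinVar_sup_span_X (A B : Ideal T) :
    adjoinVar A B ⊔ Ideal.span {Polynomial.X} = A.comap Polynomial.constantCoeff := by
  have hX : Ideal.span {(Polynomial.X : T[X])} * B.map Polynomial.C ≤ Ideal.span {Polynomial.X} :=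
    Ideal.mul_le_left
  rw [adjoinVar, sup_assoc, sup_eq_right.mpr hX, sup_comm, span_X_sup_map_C]

lemma adjoinVar_sup_span_C (A B : Ideal T) (f : T) :
    adjoinVar A B ⊔ Ideal.span {Polynomial.C f} =
      adjoinVar (A ⊔ Ideal.span {f}) (B ⊔ Ideal.span {f}) := by
  have hf : Ideal.span {(Polynomial.X : T[X])} * Ideal.span {Polynomial.C f} ≤
      Ideal.span {Polynomial.C f} := Ideal.mul_le_right
  simp only [adjoinVar, Ideal.map_sup, Ideal.map_span, Set.image_singleton, Ideal.mul_sup]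
  rw [sup_sup_sup_comm, sup_eq_left.mpr hf]

namespace GradeGE

variable [IsNoetherianRing T]

lemma map_C (h : GradeGE 𝔞 (T ⧸ A) d) :
    GradeGE (𝔞.comap Polynomial.constantCoeff) (T[X] ⧸ A.map Polynomial.C) (d + 1) := by
  rw [← sup_span_iff (f := Polynomial.X) (by simp), sup_comm, span_X_sup_map_C]
  · exact h.comap Polynomial.constantCoeff_surjective
  · rw [isSMulRegular_quotient_iff_mem_of_smul_mem]
    intro p hp
    rw [Ideal.mem_map_C_iff] at hp ⊢
    exact fun i ↦ by simpa using hp (i + 1)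

lemma adjoinVar_succ (hAB : A ≤ B) (hA : GradeGE 𝔞 (T ⧸ A) (d + 1)) (hB : GradeGE 𝔞 (T ⧸ B) d) :
    GradeGE (𝔞.comap Polynomial.constantCoeff) (T[X] ⧸ adjoinVar A B) (d + 1) := by
  refine of_colon (f := Polynomial.X) (Q := B.map Polynomial.C) (fun p ↦ ?_) hB.map_C ?_
  · rw [mem_adjoinVar hAB, Ideal.mem_map_C_iff]
    simp
  · rw [adjoinVar_sup_span_X]
    exact hA.comap Polynomial.constantCoeff_surjective

lemma exists_sub_X_mul_mem_adjoinVar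
    (h : GradeGE (𝔞.comap Polynomial.constantCoeff) (T[X] ⧸ adjoinVar A B) 2) {e : T[X]}
    (he : ∀ a ∈ 𝔞, Polynomial.C a * e ∈ adjoinVar A B) :
    ∃ m, (∀ a ∈ 𝔞, Polynomial.C a * m ∈ adjoinVar A B) ∧
      e - Polynomial.X * m ∈ adjoinVar A B := by
  rw [← span_X_sup_map_C] at h
  obtain ⟨m, hm, hem⟩ := h.exists_sub_mul_mem (e := e) fun a ha ↦ by
    have hle : 𝔞.map Polynomial.C ≤ (adjoinVar A B).colon {e} :=
      Ideal.map_le_iff_le_comap.mpr fun a ha ↦ by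
        simpa [Submodule.mem_colon_singleton] using he a ha
    simpa [Submodule.mem_colon_singleton] using hle ha
  exact ⟨m, fun a ha ↦ hm _ (Ideal.mem_map_of_mem _ ha), hem⟩

lemma one_left_of_adjoinVar (hAB : A ≤ B)
    (h : GradeGE (𝔞.comap Polynomial.constantCoeff) (T[X] ⧸ adjoinVar A B) 2) :
    GradeGE 𝔞 (T ⧸ A) 1 := by
  refine one_iff_forall_mul_mem.mpr fun u hu ↦ ?_
  obtain ⟨m, -, hm⟩ := h.exists_sub_X_mul_mem_adjoinVar (e := Polynomial.C u) fun a ha ↦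
    Ideal.mem_sup_left (Polynomial.C_mul (R := T) ▸ Ideal.mem_map_of_mem _ (hu a ha))
  simpa using ((mem_adjoinVar hAB).mp hm).1

lemma one_right_of_adjoinVar (hAB : A ≤ B)
    (h : GradeGE (𝔞.comap Polynomial.constantCoeff) (T[X] ⧸ adjoinVar A B) 2) :
    GradeGE 𝔞 (T ⧸ B) 1 := by
  refine one_iff_forall_mul_mem.mpr fun v hv ↦ ?_
  obtain ⟨m, hm𝔞, hm⟩ := h.exists_sub_X_mul_mem_adjoinVar (e := Polynomial.X * Polynomial.C v)
    fun a ha ↦ by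
      rw [mul_left_comm, ← Polynomial.C_mul]
      exact Ideal.mem_sup_right (Ideal.mul_mem_mul (Ideal.mem_span_singleton_self _)
        (Ideal.mem_map_of_mem _ (hv a ha)))
  have hm₀ : m.coeff 0 ∈ A :=
    one_iff_forall_mul_mem.mp (h.one_left_of_adjoinVar hAB) _ fun a ha ↦ by
      simpa using ((mem_adjoinVar hAB).mp (hm𝔞 a ha)).1
  have hvm : v - m.coeff 0 ∈ B := by simpa using ((mem_adjoinVar hAB).mp hm).2 0
  simpa using B.add_mem hvm (hAB hm₀)

lemma of_adjoinVar (hAB : A ≤ B)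
    (h : GradeGE (𝔞.comap Polynomial.constantCoeff) (T[X] ⧸ adjoinVar A B) (d + 1)) :
    GradeGE 𝔞 (T ⧸ B) d := by
  induction d generalizing A B with
  | zero => exact zero
  | succ d ih =>
    have h₂ := h.mono (show 2 ≤ d + 1 + 1 by lia)
    obtain ⟨f, hf, hreg⟩ := ((h₂.one_left_of_adjoinVar hAB).prod
      (h₂.one_right_of_adjoinVar hAB)).exists_isSMulRegular
    obtain ⟨hfA, hfB⟩ := Prod.isSMulRegular_iff.mp hreg
    have hfAB : IsSMulRegular (T[X] ⧸ adjoinVar A B) (Polynomial.C f) := by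
      rw [isSMulRegular_quotient_iff_mem_of_smul_mem] at hfA hfB ⊢
      intro p hp
      rw [mem_adjoinVar hAB] at hp ⊢
      exact ⟨hfA _ (by simpa using hp.1), fun i ↦ hfB _ (by simpa using hp.2 i)⟩
    rw [← sup_span_iff (by simpa using hf) hfAB, adjoinVar_sup_span_C] at h
    exact (sup_span_iff hf hfB).mp (ih (sup_le_sup_right hAB _) h)

end GradeGE

end AdjoinVar

section MonomialIdeal

variable {σ τ : Type} {K : Type} [Field K]

lemma idealOfVars_eq_ker (σ R : Type*) [CommRing R] :
    idealOfVars σ R = RingHom.ker constantCoeff := by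
  ext p
  rw [← pow_one (idealOfVars σ R), mem_pow_idealOfVars_iff']
  simp [Finsupp.degree_eq_zero_iff, constantCoeff_eq]

lemma le_polyDepth_iff [Finite σ] {I : Ideal (MvPolynomial σ K)} (hI : I ≤ idealOfVars σ K)
    {d : ℕ} : d ≤ polyDepth K I ↔ GradeGE (idealOfVars σ K) (MvPolynomial σ K ⧸ I) d := by
  have htop : idealOfVars σ K ≠ ⊤ := idealOfVars_eq_ker σ K ▸ RingHom.ker_ne_top _
  have hset : polyDepth K I = sSup {k | GradeGE (idealOfVars σ K) (MvPolynomial σ K ⧸ I) k} := by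
    simp only [gradeGE_iff_exists_isRegular htop hI]
    rfl
  obtain ⟨N, hN⟩ := exists_not_gradeGE htop I hI
  have hbdd : BddAbove {k | GradeGE (idealOfVars σ K) (MvPolynomial σ K ⧸ I) k} :=
    ⟨N, fun k hk ↦ le_of_not_ge fun h ↦ hN (hk.mono h)⟩
  rw [hset]
  exact ⟨fun h ↦ GradeGE.mono (Nat.sSup_mem ⟨0, GradeGE.zero⟩ hbdd) h, fun h ↦ le_csSup hbdd h⟩

lemma sqMon_eq_monomial (F : Finset σ) :
    sqMon K F = monomial (∑ i ∈ F, Finsupp.single i 1) (1 : K) :=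
  (monomial_sum_one F _).symm

lemma sum_single_one_le_iff {F : Finset σ} {s : σ →₀ ℕ} :
    ∑ i ∈ F, Finsupp.single i 1 ≤ s ↔ F ⊆ s.support := by
  classical
  simp only [Finsupp.le_def, Finsupp.finsetSum_apply, Finsupp.single_apply, Finset.sum_ite_eq',
    Finset.subset_iff, Finsupp.mem_support_iff, ← Nat.one_le_iff_ne_zero]
  exact forall_congr' fun i ↦ by split_ifs with hi <;> simp [hi]

variable (K) in
/-- The ideal generated by the squarefree monomials with supports in `𝒜`. -/
noncomputable def sqfreeMonomialIdeal (𝒜 : Set (Finset σ)) : Ideal (MvPolynomial σ K) :=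
  Ideal.span (sqMon K '' 𝒜)

lemma sqfreeMonomialIdeal_mono {𝒜 ℬ : Set (Finset σ)} (h : 𝒜 ⊆ ℬ) :
    sqfreeMonomialIdeal K 𝒜 ≤ sqfreeMonomialIdeal K ℬ :=
  Ideal.span_mono (Set.image_mono h)

lemma mem_sqfreeMonomialIdeal {𝒜 : Set (Finset σ)} (h𝒜 : IsUpperSet 𝒜) {p : MvPolynomial σ K} :
    p ∈ sqfreeMonomialIdeal K 𝒜 ↔ ∀ s ∈ p.support, s.support ∈ 𝒜 := by
  have hspan : sqfreeMonomialIdeal K 𝒜 = Ideal.span ((fun s ↦ monomial s (1 : K)) ''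
      ((fun F ↦ ∑ i ∈ F, Finsupp.single i 1) '' 𝒜)) := by
    rw [Set.image_image, sqfreeMonomialIdeal]
    simp only [sqMon_eq_monomial]
  simp only [hspan, mem_ideal_span_monomial_image, Set.exists_mem_image, sum_single_one_le_iff]
  exact forall₂_congr fun s _ ↦ ⟨fun ⟨F, hF, hFs⟩ ↦ h𝒜 hFs hF, fun hs ↦ ⟨_, hs, subset_rfl⟩⟩

lemma sqMon_mem_sqfreeMonomialIdeal {𝒜 : Set (Finset σ)} (h𝒜 : IsUpperSet 𝒜) {F : Finset σ} :
    sqMon K F ∈ sqfreeMonomialIdeal K 𝒜 ↔ F ∈ 𝒜 := by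
  classical
  have hF : (∑ i ∈ F, Finsupp.single i 1 : σ →₀ ℕ).support = F := by
    ext i
    simp [Finsupp.single_apply]
  simp [mem_sqfreeMonomialIdeal h𝒜, sqMon_eq_monomial, support_monomial, hF]

lemma gradeGE_sqfreeMonomialIdeal_map_iff [Finite σ] [Finite τ] (e : σ ≃ τ) {𝒜 : Set (Finset τ)}
    (h𝒜 : IsUpperSet 𝒜) {d : ℕ} :
    GradeGE (idealOfVars σ K)
        (MvPolynomial σ K ⧸ sqfreeMonomialIdeal K {F | F.map e.toEmbedding ∈ 𝒜}) d ↔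
      GradeGE (idealOfVars τ K) (MvPolynomial τ K ⧸ sqfreeMonomialIdeal K 𝒜) d := by
  classical
  have hvars : idealOfVars σ K = (idealOfVars τ K).comap (renameEquiv K e).toRingEquiv := by
    ext p
    simp [idealOfVars_eq_ker, RingHom.mem_ker, constantCoeff_rename]
  have hideal : sqfreeMonomialIdeal K {F | F.map e.toEmbedding ∈ 𝒜} =
      (sqfreeMonomialIdeal K 𝒜).comap (renameEquiv K e).toRingEquiv := by
    ext p
    have hpre : IsUpperSet {F : Finset σ | F.map e.toEmbedding ∈ 𝒜} :=
      fun F F' h hF ↦ h𝒜 (Finset.map_subset_map.mpr h) hF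
    rw [mem_sqfreeMonomialIdeal hpre, Ideal.mem_comap, mem_sqfreeMonomialIdeal h𝒜]
    simp [support_rename_of_injective e.injective,
      Finsupp.mapDomain_support_of_injective e.injective, Finset.map_eq_image]
  rw [hvars, hideal, gradeGE_comap_iff]

/-- The family of subsets of `Option σ` for which the squarefree monomial ideal is `I_𝒜 + y I_ℬ`,
where `y` is the variable indexed by `none`. -/
def joinVar (𝒜 ℬ : Set (Finset σ)) : Set (Finset (Option σ)) :=
  {F | F.eraseNone ∈ 𝒜 ∨ none ∈ F ∧ F.eraseNone ∈ ℬ}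

section JoinVar

variable {𝒜 ℬ : Set (Finset σ)} {d : ℕ}

lemma isUpperSet_joinVar (h𝒜 : IsUpperSet 𝒜) (hℬ : IsUpperSet ℬ) :
    IsUpperSet (joinVar 𝒜 ℬ) := fun F F' h hF ↦
  have h' : F.eraseNone ⊆ F'.eraseNone := Finset.eraseNone.monotone h
  hF.imp (h𝒜 h') fun hF ↦ ⟨h hF.1, hℬ h' hF.2⟩

lemma comap_optionEquivLeft_adjoinVar (h𝒜 : IsUpperSet 𝒜) (hℬ : IsUpperSet ℬ) (h : 𝒜 ⊆ ℬ) :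
    (adjoinVar (sqfreeMonomialIdeal K 𝒜) (sqfreeMonomialIdeal K ℬ)).comap
      (optionEquivLeft K σ).toRingEquiv = sqfreeMonomialIdeal K (joinVar 𝒜 ℬ) := by
  ext p
  have herase (s : Option σ →₀ ℕ) : s.support.eraseNone = s.some.support := by ext; simp
  rw [Ideal.mem_comap, mem_adjoinVar (sqfreeMonomialIdeal_mono h),
    mem_sqfreeMonomialIdeal (isUpperSet_joinVar h𝒜 hℬ)]
  simp only [mem_sqfreeMonomialIdeal h𝒜, mem_sqfreeMonomialIdeal hℬ]
  change (∀ s ∈ ((optionEquivLeft K σ p).coeff 0).support, _) ∧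
    (∀ i, ∀ s ∈ ((optionEquivLeft K σ p).coeff (i + 1)).support, _) ↔ _
  simp only [mem_support_coeff_optionEquivLeft, joinVar, Set.mem_ofPred_eq, herase]
  refine ⟨fun ⟨h0, hsucc⟩ s hs ↦ ?_, fun hs ↦ ⟨fun m hm ↦ by simpa using hs _ hm, fun i m hm ↦ ?_⟩⟩
  · rw [← s.optionElim_some] at hs
    cases hn : s none with
    | zero => exact .inl (h0 _ (hn ▸ hs))
    | succ i => exact .inr ⟨by simp [hn], hsucc i _ (hn ▸ hs)⟩
  · simpa using (hs _ hm).elim (fun hm ↦ h hm) And.right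

lemma gradeGE_joinVar_iff [Finite σ] (h𝒜 : IsUpperSet 𝒜) (hℬ : IsUpperSet ℬ) (h : 𝒜 ⊆ ℬ) :
    GradeGE (idealOfVars (Option σ) K)
        (MvPolynomial (Option σ) K ⧸ sqfreeMonomialIdeal K (joinVar 𝒜 ℬ)) d ↔
      GradeGE ((idealOfVars σ K).comap Polynomial.constantCoeff) (Polynomial (MvPolynomial σ K) ⧸
        adjoinVar (sqfreeMonomialIdeal K 𝒜) (sqfreeMonomialIdeal K ℬ)) d := by
  have hvars : idealOfVars (Option σ) K = ((idealOfVars σ K).comap Polynomial.constantCoeff).comap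
      (optionEquivLeft K σ).toRingEquiv := by
    ext p
    have hp : ((optionEquivLeft K σ p).coeff 0).coeff 0 = p.coeff 0 := by
      simp [optionEquivLeft_coeff_coeff]
    simp [idealOfVars_eq_ker, RingHom.mem_ker, constantCoeff_eq, hp]
  rw [hvars, ← comap_optionEquivLeft_adjoinVar h𝒜 hℬ h, gradeGE_comap_iff]

lemma gradeGE_joinVar_self [Finite σ] (h𝒜 : IsUpperSet 𝒜)
    (h : GradeGE (idealOfVars σ K) (MvPolynomial σ K ⧸ sqfreeMonomialIdeal K 𝒜) d) :
    GradeGE (idealOfVars (Option σ) K)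
      (MvPolynomial (Option σ) K ⧸ sqfreeMonomialIdeal K (joinVar 𝒜 𝒜)) (d + 1) := by
  rw [gradeGE_joinVar_iff h𝒜 h𝒜 subset_rfl, adjoinVar_self]
  exact h.map_C

lemma gradeGE_joinVar_succ [Finite σ] (h𝒜 : IsUpperSet 𝒜) (hℬ : IsUpperSet ℬ) (h : 𝒜 ⊆ ℬ)
    (hd𝒜 : GradeGE (idealOfVars σ K) (MvPolynomial σ K ⧸ sqfreeMonomialIdeal K 𝒜) (d + 1))
    (hdℬ : GradeGE (idealOfVars σ K) (MvPolynomial σ K ⧸ sqfreeMonomialIdeal K ℬ) d) :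
    GradeGE (idealOfVars (Option σ) K)
      (MvPolynomial (Option σ) K ⧸ sqfreeMonomialIdeal K (joinVar 𝒜 ℬ)) (d + 1) :=
  (gradeGE_joinVar_iff h𝒜 hℬ h).mpr (hd𝒜.adjoinVar_succ (sqfreeMonomialIdeal_mono h) hdℬ)

lemma gradeGE_of_joinVar [Finite σ] (h𝒜 : IsUpperSet 𝒜) (hℬ : IsUpperSet ℬ) (h : 𝒜 ⊆ ℬ)
    (hd : GradeGE (idealOfVars (Option σ) K)
      (MvPolynomial (Option σ) K ⧸ sqfreeMonomialIdeal K (joinVar 𝒜 ℬ)) (d + 1)) :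
    GradeGE (idealOfVars σ K) (MvPolynomial σ K ⧸ sqfreeMonomialIdeal K ℬ) d :=
  ((gradeGE_joinVar_iff h𝒜 hℬ h).mp hd).of_adjoinVar (sqfreeMonomialIdeal_mono h)

/-- The family of subsets of `Option (Option σ)` for which the squarefree monomial ideal is
`I_𝒜 + y z I_ℬ`, where `y` and `z` are the variables indexed by `none` and `some none`. -/
def joinPair (𝒜 ℬ : Set (Finset σ)) : Set (Finset (Option (Option σ))) :=
  joinVar (joinVar 𝒜 𝒜) (joinVar 𝒜 ℬ)

lemma mem_joinPair {F : Finset (Option (Option σ))} :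
    F ∈ joinPair 𝒜 ℬ ↔ F.eraseNone.eraseNone ∈ 𝒜 ∨
      (none ∈ F ∧ some none ∈ F) ∧ F.eraseNone.eraseNone ∈ ℬ := by
  simp only [joinPair, joinVar, Set.mem_ofPred_eq, Finset.mem_eraseNone]
  tauto

lemma joinVar_self_subset (h : 𝒜 ⊆ ℬ) : joinVar 𝒜 𝒜 ⊆ joinVar 𝒜 ℬ :=
  fun _ hF ↦ hF.imp_right fun hF ↦ ⟨hF.1, h hF.2⟩

lemma gradeGE_joinPair [Finite σ] (h𝒜 : IsUpperSet 𝒜) (hℬ : IsUpperSet ℬ) (h : 𝒜 ⊆ ℬ)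
    (hd𝒜 : GradeGE (idealOfVars σ K) (MvPolynomial σ K ⧸ sqfreeMonomialIdeal K 𝒜) (d + 1))
    (hdℬ : GradeGE (idealOfVars σ K) (MvPolynomial σ K ⧸ sqfreeMonomialIdeal K ℬ) d) :
    GradeGE (idealOfVars (Option (Option σ)) K)
      (MvPolynomial (Option (Option σ)) K ⧸ sqfreeMonomialIdeal K (joinPair 𝒜 ℬ)) (d + 2) :=
  gradeGE_joinVar_succ (isUpperSet_joinVar h𝒜 h𝒜) (isUpperSet_joinVar h𝒜 hℬ)
    (joinVar_self_subset h) (gradeGE_joinVar_self h𝒜 hd𝒜) (gradeGE_joinVar_succ h𝒜 hℬ h hd𝒜 hdℬ)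

lemma gradeGE_of_joinPair [Finite σ] (h𝒜 : IsUpperSet 𝒜) (hℬ : IsUpperSet ℬ) (h : 𝒜 ⊆ ℬ)
    (hd : GradeGE (idealOfVars (Option (Option σ)) K)
      (MvPolynomial (Option (Option σ)) K ⧸ sqfreeMonomialIdeal K (joinPair 𝒜 ℬ)) (d + 2)) :
    GradeGE (idealOfVars σ K) (MvPolynomial σ K ⧸ sqfreeMonomialIdeal K ℬ) d :=
  gradeGE_of_joinVar h𝒜 hℬ h <| gradeGE_of_joinVar (isUpperSet_joinVar h𝒜 h𝒜)
    (isUpperSet_joinVar h𝒜 hℬ) (joinVar_self_subset h) hd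

end JoinVar

end MonomialIdeal

section Matchings

variable {V W : Type} {G : SimpleGraph V} {k l : ℕ}

variable (G) in
/-- The exponents of the products of `k` edges of `G`. -/
def edgeProductExponents : ℕ → Set (V →₀ ℕ)
  | 0 => {0}
  | k + 1 => {s | ∃ i j, G.Adj i j ∧ ∃ t ∈ edgeProductExponents k,
      s = Finsupp.single i 1 + Finsupp.single j 1 + t}

lemma edgeIdeal_pow_eq_span (K : Type) [Field K] (k : ℕ) : edgeIdeal K G ^ k =
    Ideal.span ((fun s ↦ monomial s (1 : K)) '' edgeProductExponents G k) := by
  induction k with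
  | zero => simp [edgeProductExponents]
  | succ k ih =>
    rw [pow_succ', ih, edgeIdeal, Ideal.span_mul_span']
    congr 1
    ext p
    simp only [Set.mem_mul, Set.mem_ofPred_eq, Set.mem_image, edgeProductExponents]
    constructor
    · rintro ⟨_, ⟨i, j, hij, rfl⟩, _, ⟨t, ht, rfl⟩, rfl⟩
      exact ⟨_, ⟨i, j, hij, t, ht, rfl⟩, by simp [X, monomial_mul]⟩
    · rintro ⟨_, ⟨i, j, hij, t, ht, rfl⟩, rfl⟩
      exact ⟨_, ⟨i, j, hij, rfl⟩, _, ⟨t, ht, rfl⟩, by simp [X, monomial_mul]⟩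

variable [DecidableEq V] [DecidableEq W]

/-- The vertex set `F` contains a matching of `G` with `k` edges. The recursion on `k` removes the
endpoints of one edge of the matching from `F`. -/
def ContainsMatching (G : SimpleGraph V) : ℕ → Finset V → Prop
  | 0, _ => True
  | k + 1, F => ∃ i j, G.Adj i j ∧ i ∈ F ∧ j ∈ F ∧ ContainsMatching G k (F \ {i, j})

namespace ContainsMatching

variable {F F' : Finset V}

lemma mono (hF : F ⊆ F') (h : ContainsMatching G k F) : ContainsMatching G k F' := by
  induction k generalizing F F' with
  | zero => trivial
  | succ k ih =>
    obtain ⟨i, j, hij, hi, hj, h⟩ := h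
    exact ⟨i, j, hij, hF hi, hF hj, ih (Finset.sdiff_subset_sdiff hF le_rfl) h⟩

lemma of_le (hkl : k ≤ l) (h : ContainsMatching G l F) : ContainsMatching G k F := by
  induction l, hkl using Nat.le_induction with
  | base => exact h
  | succ l _ ih =>
    obtain ⟨i, j, -, -, -, h⟩ := h
    exact ih (h.mono Finset.sdiff_subset)

lemma exists_card_eq (h : ContainsMatching G k F) :
    ∃ F' ⊆ F, F'.card = 2 * k ∧ ContainsMatching G k F' := by
  induction k generalizing F with
  | zero => exact ⟨∅, by simp, by simp, trivial⟩
  | succ k ih =>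
    obtain ⟨i, j, hij, hi, hj, h⟩ := h
    obtain ⟨F', hF', hcard, hmatching⟩ := ih h
    have hdisj : Disjoint F' {i, j} := Finset.disjoint_of_subset_left hF' Finset.sdiff_disjoint
    refine ⟨F' ∪ {i, j}, ?_, ?_, i, j, hij, by simp, by simp, hmatching.mono ?_⟩
    · refine Finset.union_subset (hF'.trans Finset.sdiff_subset) ?_
      simp [Finset.insert_subset_iff, hi, hj]
    · rw [Finset.card_union_of_disjoint hdisj, hcard, Finset.card_pair hij.ne]
      ring
    · rw [Finset.union_sdiff_cancel_right hdisj]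

lemma two_mul_le_card (h : ContainsMatching G k F) : 2 * k ≤ F.card := by
  obtain ⟨F', hF, hcard, -⟩ := h.exists_card_eq
  exact hcard ▸ Finset.card_le_card hF

lemma of_edgeProductExponents {s : V →₀ ℕ} (hs : s ∈ edgeProductExponents G k)
    (hsF : s ≤ ∑ i ∈ F, Finsupp.single i 1) : ContainsMatching G k F := by
  induction k generalizing F s with
  | zero => trivial
  | succ k ih =>
    obtain ⟨i, j, hij, t, ht, rfl⟩ := hs
    have hle (v : V) : (if i = v then 1 else 0) + (if j = v then 1 else 0) + t v ≤
        if v ∈ F then 1 else 0 := by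
      simpa [Finsupp.finsetSum_apply, Finsupp.single_apply] using hsF v
    have hne := hij.ne
    refine ⟨i, j, hij, by grind, by grind, ih ht fun v ↦ ?_⟩
    have hv := hle v
    simp only [Finsupp.finsetSum_apply, Finsupp.single_apply, Finset.sum_ite_eq',
      Finset.mem_sdiff, Finset.mem_insert, Finset.mem_singleton]
    grind

lemma sqMon_mem (K : Type) [Field K] (h : ContainsMatching G k F) :
    sqMon K F ∈ edgeIdeal K G ^ k := by
  induction k generalizing F with
  | zero => simp
  | succ k ih =>
    obtain ⟨i, j, hij, hi, hj, h⟩ := h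
    have hsub : {i, j} ⊆ F := by simp [Finset.insert_subset_iff, hi, hj]
    rw [sqMon, ← Finset.prod_sdiff hsub, Finset.prod_pair hij.ne, pow_succ]
    exact Ideal.mul_mem_mul (ih h) (Ideal.subset_span ⟨i, j, hij, rfl⟩)

lemma map_iff {G' : SimpleGraph W} (φ : G ≃g G') :
    ContainsMatching G' k (F.map φ.toEquiv.toEmbedding) ↔ ContainsMatching G k F := by
  induction k generalizing F with
  | zero => rfl
  | succ k ih =>
    have hmem (F : Finset V) (v : V) : φ v ∈ F.map φ.toEquiv.toEmbedding ↔ v ∈ F :=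
      Finset.mem_map' _
    have hsdiff (i j : V) : F.map φ.toEquiv.toEmbedding \ {φ i, φ j} =
        (F \ {i, j}).map φ.toEquiv.toEmbedding := by
      ext v
      obtain ⟨u, rfl⟩ := φ.surjective v
      simp only [hmem, Finset.mem_sdiff, Finset.mem_insert, Finset.mem_singleton,
        φ.injective.eq_iff]
    simp only [ContainsMatching, φ.surjective.exists, hmem, hsdiff, ih, φ.map_adj_iff]

end ContainsMatching

lemma isUpperSet_containsMatching (G : SimpleGraph V) (k : ℕ) :
    IsUpperSet {F | ContainsMatching G k F} := fun _ _ hF h ↦ ContainsMatching.mono hF h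

variable (K : Type) [Field K]

lemma sqMon_mem_edgeIdeal_pow_iff {F : Finset V} :
    sqMon K F ∈ edgeIdeal K G ^ k ↔ ContainsMatching G k F := by
  refine ⟨fun h ↦ ?_, fun h ↦ h.sqMon_mem K⟩
  rw [edgeIdeal_pow_eq_span, sqMon_eq_monomial, mem_ideal_span_monomial_image] at h
  obtain ⟨s, hs, hle⟩ := h (∑ i ∈ F, Finsupp.single i 1) (by simp [mem_support_iff])
  exact .of_edgeProductExponents hs hle

lemma sqfreePower_edgeIdeal (G : SimpleGraph V) (k : ℕ) :
    sqfreePower K (edgeIdeal K G) k = sqfreeMonomialIdeal K {F | ContainsMatching G k F} := by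
  rw [sqfreePower, sqfreeMonomialIdeal]
  congr 1
  ext m
  simp only [Set.mem_ofPred_eq, Set.mem_image, ← sqMon_mem_edgeIdeal_pow_iff K]
  exact ⟨fun ⟨F, hm, hF⟩ ↦ ⟨F, hm ▸ hF, hm.symm⟩, fun ⟨F, hF, hm⟩ ↦ ⟨F, hm.symm, hm ▸ hF⟩⟩

lemma indeg_sqfreePower_edgeIdeal {F : Finset V} (hF : ContainsMatching G k F) :
    indeg K (sqfreePower K (edgeIdeal K G) k) = 2 * k := by
  simp only [indeg, sqfreePower_edgeIdeal,
    sqMon_mem_sqfreeMonomialIdeal (isUpperSet_containsMatching G k), Set.mem_ofPred_eq]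
  obtain ⟨F', -, hcard, hmatching⟩ := hF.exists_card_eq
  refine le_antisymm (Nat.sInf_le ⟨F', hcard, hmatching⟩) (le_csInf ⟨_, F', hcard, hmatching⟩ ?_)
  rintro _ ⟨E, rfl, hE⟩
  exact hE.two_mul_le_card

lemma sqfreePower_edgeIdeal_ne_bot_iff [Fintype V] :
    sqfreePower K (edgeIdeal K G) k ≠ ⊥ ↔ ContainsMatching G k Finset.univ := by
  have hsqMon (F : Finset V) : sqMon K F ≠ 0 := Finset.prod_ne_zero_iff.mpr fun i _ ↦ X_ne_zero i
  rw [sqfreePower_edgeIdeal, sqfreeMonomialIdeal, Ne, Ideal.span_eq_bot]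
  simp only [Set.forall_mem_image, hsqMon, Set.mem_ofPred_eq, imp_false, not_forall, not_not]
  exact ⟨fun ⟨F, hF⟩ ↦ hF.mono (Finset.subset_univ F), fun h ↦ ⟨_, h⟩⟩

lemma le_monGrade_edgeIdeal_iff [Fintype V] :
    k ≤ monGrade K (edgeIdeal K G) ↔ ContainsMatching G k Finset.univ := by
  simp only [monGrade, sqfreePower_edgeIdeal_ne_bot_iff]
  have hbdd : BddAbove {k | ContainsMatching G k (Finset.univ : Finset V)} :=
    ⟨Fintype.card V, fun k hk ↦ by linarith [hk.two_mul_le_card, Finset.card_univ (α := V)]⟩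
  have h0 : ContainsMatching G 0 (Finset.univ : Finset V) := trivial
  exact ⟨fun h ↦ (Nat.sSup_mem ⟨0, h0⟩ hbdd : ContainsMatching G _ _).of_le h,
    fun h ↦ le_csSup hbdd h⟩

omit [DecidableEq V] in
lemma nDepth_edgeIdeal [Finite V] (hk : k ≤ monGrade K (edgeIdeal K G)) :
    nDepth K (edgeIdeal K G) k = polyDepth K (sqfreePower K (edgeIdeal K G) k) - (2 * k - 1) := by
  classical
  have := Fintype.ofFinite V
  rw [nDepth, indeg_sqfreePower_edgeIdeal K ((le_monGrade_edgeIdeal_iff K).mp hk)]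
  push_cast
  rfl

omit [DecidableEq V] in
lemma sqfreePower_edgeIdeal_le_idealOfVars (hk : 0 < k) :
    sqfreePower K (edgeIdeal K G) k ≤ idealOfVars V K := by
  classical
  obtain ⟨k, rfl⟩ := Nat.exists_eq_add_of_le' hk
  rw [sqfreePower_edgeIdeal, sqfreeMonomialIdeal, Ideal.span_le]
  rintro _ ⟨F, ⟨i, -, -, hi, -⟩, rfl⟩
  exact Ideal.mem_of_dvd _ (Finset.dvd_prod_of_mem _ hi) (Ideal.subset_span ⟨i, rfl⟩)

lemma le_polyDepth_sqfreePower_edgeIdeal_iff [Finite V] {d : ℕ} (hk : 0 < k) :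
    d ≤ polyDepth K (sqfreePower K (edgeIdeal K G) k) ↔ GradeGE (idealOfVars V K)
      (MvPolynomial V K ⧸ sqfreeMonomialIdeal K {F | ContainsMatching G k F}) d := by
  rw [le_polyDepth_iff (sqfreePower_edgeIdeal_le_idealOfVars K hk), sqfreePower_edgeIdeal]

end Matchings

section AdjoinEdge

variable {V W : Type} {H : SimpleGraph V} {G : SimpleGraph W} {k : ℕ}

section DisjointUnion

variable [DecidableEq V] [DecidableEq W] {l : ℕ} {F : Finset (V ⊕ W)}

lemma toLeft_sdiff_pair_inl (F : Finset (V ⊕ W)) (i j : V) :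
    (F \ {.inl i, .inl j}).toLeft = F.toLeft \ {i, j} := by ext; simp

lemma toLeft_sdiff_pair_inr (F : Finset (V ⊕ W)) (i j : W) :
    (F \ {.inr i, .inr j}).toLeft = F.toLeft := by ext; simp

lemma toRight_sdiff_pair_inl (F : Finset (V ⊕ W)) (i j : V) :
    (F \ {.inl i, .inl j}).toRight = F.toRight := by ext; simp

lemma toRight_sdiff_pair_inr (F : Finset (V ⊕ W)) (i j : W) :
    (F \ {.inr i, .inr j}).toRight = F.toRight \ {i, j} := by ext; simp

lemma ContainsMatching.sum (hH : ContainsMatching H k F.toLeft)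
    (hG : ContainsMatching G l F.toRight) : ContainsMatching (H ⊕g G) (k + l) F := by
  induction k generalizing F with
  | zero =>
    rw [zero_add]
    induction l generalizing F with
    | zero => trivial
    | succ l ih =>
      obtain ⟨i, j, hij, hi, hj, hG⟩ := hG
      exact ⟨.inr i, .inr j, hij, Finset.mem_toRight.mp hi, Finset.mem_toRight.mp hj,
        ih trivial (by rwa [toRight_sdiff_pair_inr])⟩
  | succ k ih =>
    obtain ⟨i, j, hij, hi, hj, hH⟩ := hH
    rw [Nat.succ_add]
    exact ⟨.inl i, .inl j, hij, Finset.mem_toLeft.mp hi, Finset.mem_toLeft.mp hj,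
      ih (by rwa [toLeft_sdiff_pair_inl]) (by rwa [toRight_sdiff_pair_inl])⟩

lemma containsMatching_sum_iff : ContainsMatching (H ⊕g G) k F ↔
    ∃ i j, i + j = k ∧ ContainsMatching H i F.toLeft ∧ ContainsMatching G j F.toRight := by
  refine ⟨fun h ↦ ?_, fun ⟨i, j, hij, hi, hj⟩ ↦ hij ▸ hi.sum hj⟩
  induction k generalizing F with
  | zero => exact ⟨0, 0, rfl, trivial, trivial⟩
  | succ k ih =>
    obtain ⟨a | a, b | b, hab, ha, hb, h⟩ := h
    · obtain ⟨i, j, rfl, hi, hj⟩ := ih h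
      rw [toLeft_sdiff_pair_inl] at hi
      rw [toRight_sdiff_pair_inl] at hj
      exact ⟨i + 1, j, by lia, ⟨a, b, hab, by simpa, by simpa, hi⟩, hj⟩
    · exact absurd hab Bool.false_ne_true
    · exact absurd hab Bool.false_ne_true
    · obtain ⟨i, j, rfl, hi, hj⟩ := ih h
      rw [toLeft_sdiff_pair_inr] at hi
      rw [toRight_sdiff_pair_inr] at hj
      exact ⟨i, j + 1, by lia, hi, ⟨a, b, hab, by simpa, by simpa, hj⟩⟩

end DisjointUnion

lemma containsMatching_top_fin_two_iff {F : Finset (Fin 2)} :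
    ContainsMatching ⊤ k F ↔ k = 0 ∨ k = 1 ∧ F = Finset.univ := by
  constructor
  · intro h
    have hk : 2 * k ≤ 2 := h.two_mul_le_card.trans (Finset.card_le_univ F)
    obtain rfl | rfl : k = 0 ∨ k = 1 := by lia
    · exact .inl rfl
    · exact .inr ⟨rfl, (Finset.card_eq_iff_eq_univ F).mp
        (le_antisymm (Finset.card_le_univ F) h.two_mul_le_card)⟩
  · rintro (rfl | ⟨rfl, rfl⟩)
    · trivial
    · exact ⟨0, 1, by simp, by simp, by simp, trivial⟩

lemma containsMatching_sum_edge_succ_iff [DecidableEq V] {F : Finset (V ⊕ Fin 2)} :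
    ContainsMatching (H ⊕g (⊤ : SimpleGraph (Fin 2))) (k + 1) F ↔
      ContainsMatching H (k + 1) F.toLeft ∨
        F.toRight = Finset.univ ∧ ContainsMatching H k F.toLeft := by
  simp only [containsMatching_sum_iff, containsMatching_top_fin_two_iff]
  constructor
  · rintro ⟨i, j, hij, hi, rfl | ⟨rfl, hF⟩⟩
    · exact .inl (hij ▸ hi)
    · obtain rfl : i = k := by lia
      exact .inr ⟨hF, hi⟩
  · rintro (h | ⟨hF, h⟩)
    · exact ⟨k + 1, 0, rfl, h, .inl rfl⟩
    · exact ⟨k, 1, rfl, h, .inr ⟨rfl, hF⟩⟩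

/-- Two extra points adjoined to `V` as `Option (Option V)` instead of `V ⊕ Fin 2`. -/
def optionOptionEquivSumFinTwo (V : Type) : Option (Option V) ≃ V ⊕ Fin 2 where
  toFun
    | none => .inr 0
    | some none => .inr 1
    | some (some v) => .inl v
  invFun := Sum.elim (fun v ↦ some (some v)) ![none, some none]
  left_inv := by rintro (_ | _ | _) <;> rfl
  right_inv := by
    rintro (v | i)
    · rfl
    · fin_cases i <;> rfl

lemma containsMatching_map_optionOptionEquivSumFinTwo_iff [DecidableEq V]
    {F : Finset (Option (Option V))} :
    ContainsMatching (H ⊕g (⊤ : SimpleGraph (Fin 2))) (k + 1)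
        (F.map (optionOptionEquivSumFinTwo V).toEmbedding) ↔
      F ∈ joinPair {F | ContainsMatching H (k + 1) F} {F | ContainsMatching H k F} := by
  have hleft : (F.map (optionOptionEquivSumFinTwo V).toEmbedding).toLeft =
      F.eraseNone.eraseNone := by
    ext v
    simp [optionOptionEquivSumFinTwo, Finset.mem_map_equiv]
  have hright : (F.map (optionOptionEquivSumFinTwo V).toEmbedding).toRight = Finset.univ ↔
      none ∈ F ∧ some none ∈ F := by
    simp [optionOptionEquivSumFinTwo, Finset.eq_univ_iff_forall, Fin.forall_fin_two]
  simp only [containsMatching_sum_edge_succ_iff, hleft, hright, mem_joinPair, Set.mem_ofPred_eq]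

variable (K : Type) [Field K]

lemma monGrade_edgeIdeal_sum_edge [Finite V] [Finite W]
    (φ : H ⊕g (⊤ : SimpleGraph (Fin 2)) ≃g G) :
    monGrade K (edgeIdeal K G) = monGrade K (edgeIdeal K H) + 1 := by
  classical
  have := Fintype.ofFinite V
  have := Fintype.ofFinite W
  have hle (k : ℕ) : k + 1 ≤ monGrade K (edgeIdeal K G) ↔ k ≤ monGrade K (edgeIdeal K H) := by
    have hleft : (Finset.univ : Finset (V ⊕ Fin 2)).toLeft = Finset.univ := by ext; simp
    have hright : (Finset.univ : Finset (V ⊕ Fin 2)).toRight = Finset.univ := by ext; simp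
    rw [le_monGrade_edgeIdeal_iff, le_monGrade_edgeIdeal_iff,
      ← Finset.map_univ_equiv φ.toEquiv, ContainsMatching.map_iff φ,
      containsMatching_sum_edge_succ_iff, hleft, hright]
    exact ⟨fun h ↦ h.elim (ContainsMatching.of_le k.le_succ) And.right, fun h ↦ .inr ⟨rfl, h⟩⟩
  have hge := (hle _).mpr le_rfl
  have hpred := (hle (monGrade K (edgeIdeal K G) - 1)).mp (by lia)
  lia

lemma gradeGE_sum_edge_iff [DecidableEq V] [DecidableEq W] [Finite V] [Finite W]
    (φ : H ⊕g (⊤ : SimpleGraph (Fin 2)) ≃g G) {d : ℕ} :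
    GradeGE (idealOfVars W K)
        (MvPolynomial W K ⧸ sqfreeMonomialIdeal K {F | ContainsMatching G (k + 1) F}) d ↔
      GradeGE (idealOfVars (Option (Option V)) K) (MvPolynomial (Option (Option V)) K ⧸
        sqfreeMonomialIdeal K
          (joinPair {F | ContainsMatching H (k + 1) F} {F | ContainsMatching H k F})) d := by
  have hfamily : {F : Finset (Option (Option V)) | F.map ((optionOptionEquivSumFinTwo V).trans
        φ.toEquiv).toEmbedding ∈ {F | ContainsMatching G (k + 1) F}} =
      joinPair {F | ContainsMatching H (k + 1) F} {F | ContainsMatching H k F} := by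
    ext F
    rw [← containsMatching_map_optionOptionEquivSumFinTwo_iff, ← ContainsMatching.map_iff φ,
      Finset.map_map]
    rfl
  rw [← hfamily, gradeGE_sqfreeMonomialIdeal_map_iff _ (isUpperSet_containsMatching G (k + 1))]

lemma polyDepth_sqfreePower_succ_le_add_two [Finite V] [Finite W]
    (φ : H ⊕g (⊤ : SimpleGraph (Fin 2)) ≃g G) (hk : 0 < k) :
    polyDepth K (sqfreePower K (edgeIdeal K G) (k + 1)) ≤
      polyDepth K (sqfreePower K (edgeIdeal K H) k) + 2 := by
  classical
  by_contra! hlt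
  have hG := (le_polyDepth_sqfreePower_edgeIdeal_iff K k.succ_pos).mp (Nat.succ_le_iff.mpr hlt)
  rw [gradeGE_sum_edge_iff K φ] at hG
  have hH := gradeGE_of_joinPair (isUpperSet_containsMatching H (k + 1))
    (isUpperSet_containsMatching H k) (fun F ↦ ContainsMatching.of_le k.le_succ) hG
  exact (Nat.lt_irrefl _) ((le_polyDepth_sqfreePower_edgeIdeal_iff K hk).mpr hH)

lemma polyDepth_sqfreePower_succ_le [Finite V] [Finite W]
    (φ : H ⊕g (⊤ : SimpleGraph (Fin 2)) ≃g G)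
    (h : 0 < k → polyDepth K (sqfreePower K (edgeIdeal K H) (k + 1)) ≤
      polyDepth K (sqfreePower K (edgeIdeal K H) k) + 2) :
    polyDepth K (sqfreePower K (edgeIdeal K H) (k + 1)) ≤
      polyDepth K (sqfreePower K (edgeIdeal K G) (k + 1)) := by
  classical
  set D := polyDepth K (sqfreePower K (edgeIdeal K H) (k + 1)) with hD
  obtain h0 | hpos := D.eq_zero_or_pos
  · exact h0 ▸ Nat.zero_le _
  have hsucc : D - 2 + 1 ≤ D := by lia
  rw [hD, le_polyDepth_sqfreePower_edgeIdeal_iff K k.succ_pos] at hsucc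
  have hself : GradeGE (idealOfVars V K)
      (MvPolynomial V K ⧸ sqfreeMonomialIdeal K {F | ContainsMatching H k F}) (D - 2) := by
    obtain rfl | hk := k.eq_zero_or_pos
    · have htop : sqfreeMonomialIdeal K {F | ContainsMatching H 0 F} = ⊤ := by
        rw [← sqfreePower_edgeIdeal, Ideal.eq_top_iff_one]
        exact Ideal.subset_span ⟨∅, by simp [sqMon], by simp⟩
      have := Ideal.Quotient.subsingleton_iff.mpr htop
      exact .of_subsingleton
    · rw [← le_polyDepth_sqfreePower_edgeIdeal_iff K hk]
      have := h hk
      lia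
  have hG := gradeGE_joinPair (isUpperSet_containsMatching H (k + 1))
    (isUpperSet_containsMatching H k) (fun F ↦ ContainsMatching.of_le k.le_succ) hsucc hself
  rw [← gradeGE_sum_edge_iff K φ, ← le_polyDepth_sqfreePower_edgeIdeal_iff K k.succ_pos] at hG
  lia

theorem normalized_depth_of_adjoin_edge_nonincreasing_general [Finite V] [Finite W]
    (φ : H ⊕g (⊤ : SimpleGraph (Fin 2)) ≃g G)
    (hg : ∀ k : ℕ, 1 ≤ k → k + 1 ≤ monGrade K (edgeIdeal K H) →
      nDepth K (edgeIdeal K H) (k + 1) ≤ nDepth K (edgeIdeal K H) k) :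
    monGrade K (edgeIdeal K G) = monGrade K (edgeIdeal K H) + 1 ∧
    ∀ k : ℕ, 1 ≤ k → k + 1 ≤ monGrade K (edgeIdeal K G) →
      nDepth K (edgeIdeal K G) (k + 1) ≤ nDepth K (edgeIdeal K G) k := by
  have hν := monGrade_edgeIdeal_sum_edge K φ
  refine ⟨hν, fun k hk hkG ↦ ?_⟩
  have hupper := polyDepth_sqfreePower_succ_le_add_two K φ hk
  obtain ⟨k, rfl⟩ := Nat.exists_eq_add_of_le' hk
  have hlower := polyDepth_sqfreePower_succ_le K φ (k := k) fun hk ↦ by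
    have hmono := hg k hk (by lia)
    rw [nDepth_edgeIdeal K (by lia), nDepth_edgeIdeal K (by lia)] at hmono
    push_cast at hmono
    lia
  rw [nDepth_edgeIdeal K hkG, nDepth_edgeIdeal K (by lia)]
  push_cast
  lia

/-- Adjoining a disjoint edge in the sense of `IsAdjoinEdge` is the disjoint union with the
complete graph on two vertices. -/
def IsAdjoinEdge.sumIso {n : ℕ} {H : SimpleGraph (Fin n)} {G : SimpleGraph (Fin (n + 2))}
    (hG : IsAdjoinEdge H G) : H ⊕g (⊤ : SimpleGraph (Fin 2)) ≃g G where
  toEquiv := finSumFinEquiv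
  map_rel_iff' {a b} := by
    rw [hG]
    rcases a with a | a <;> rcases b with b | b <;>
      simp only [SimpleGraph.sum, SimpleGraph.top_adj, Bool.false_eq_true,
        finSumFinEquiv_apply_left, finSumFinEquiv_apply_right, Fin.ext_iff, Fin.val_castAdd,
        Fin.val_natAdd, Fin.val_castLE] <;>
      grind

end AdjoinEdge

/-- **Corollary 3.9.** Let `H` be a cochordal graph on `[n]` with no isolated vertices
and let `G` be the graph on `[n+2]` with edge set `E(H) ∪ {{n+1, n+2}}`. If
`g_{I(H)}` is non-increasing on `{1,…,ν(I(H))}`, then `g_{I(G)}` is non-increasing on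
`{1,…,ν(I(G))} = {1,…,ν(I(H))+1}`. -/
theorem normalized_depth_of_adjoin_edge_nonincreasing (K : Type) [Field K] (n : ℕ)
    (H : SimpleGraph (Fin n)) (hch : IsChordal Hᶜ) (hiso : NoIsolated H)
    (G : SimpleGraph (Fin (n + 2))) (hG : IsAdjoinEdge H G)
    (hg : ∀ k : ℕ, 1 ≤ k → k + 1 ≤ monGrade K (edgeIdeal K H) →
      nDepth K (edgeIdeal K H) (k + 1) ≤ nDepth K (edgeIdeal K H) k) :
    monGrade K (edgeIdeal K G) = monGrade K (edgeIdeal K H) + 1 ∧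
    ∀ k : ℕ, 1 ≤ k → k + 1 ≤ monGrade K (edgeIdeal K G) →
      nDepth K (edgeIdeal K G) (k + 1) ≤ nDepth K (edgeIdeal K G) k :=
  normalized_depth_of_adjoin_edge_nonincreasing_general K hG.sumIso hg
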